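/- For every real s > 2 and every A > 0, the triangular lattice Λ_A is the unique, up to rotation, minimizer of the Epstein zeta function L ↦ ζ_L(s) among all Bravais lattices of ℝ² of area A: ζ_{Λ_A}(s) ≤ ζ_L(s) for every Bravais lattice L with |L| = A, with equality only if L is the image of Λ_A under a linear isometry of ℝ². -/

import Mathlib

/-!
The proof goes through theta series. Every lattice of area `A` has an obtuse basis, so that its
squared norm is `2A/√3` times a form `qf p q r (m, n) = p m² + q n² + r (m - n)²` with
`p, q, r ≥ 0` and `pq + qr + rp = 3/4`; the triangular lattice is `p = q = r = 1/2`. The zeta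
function is then, up to a common positive factor and `Γ(s/2)`, the Mellin transform of
`theta p q r t - 1` (`lintegral_mellinSum`, `mellinSum_eq`), so it suffices that the triangular form
minimizes `theta p q r t` for every `t > 0`, strictly so against other forms (`theta_min`).

The functional equation `√a θ(a) = √b θ(b)` for `ab = 4π²/3` (`theta_functional`), proved by
one-dimensional Poisson summation in each variable, reduces `theta_min` to parameters `a ≥ 18/5`,
since `(18/5)² < 4π²/3`.

For such `a` (`theta_gap`), the theta series is averaged over the order-three automorphism `rot` of
the triangular form. At a vector of triangular norm `H` the three values averaged have mean
`H (1 + ε)`, where `ε = 2(p + q + r)/3 - 1 ≥ 0` vanishes only for the triangular form. On the six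
vectors with `H = 1` there is a gain of order `min 1 ε * exp (-a)`, because the constraint
`pq + qr + rp = 3/4` forces the spread of the three values to compensate for their larger mean
(`first_shell`). On the vectors with `H ≥ 3`, Jensen's inequality bounds the loss
(`shellDiff_ge_far`), and the total loss is smaller than the gain.

In the equality case `ε = 0`, hence `p = q = r = 1/2`, and the Gram matrices agree, which gives the
isometry (`isRotationOf_tri`).
-/

noncomputable section
open Real

abbrev R2 := EuclideanSpace ℝ (Fin 2)

def vec2 (x y : ℝ) : R2 := (WithLp.equiv 2 (Fin 2 → ℝ)).symm ![x, y]

/-- `L` is the Bravais lattice generated by the basis `(u, v)` of `ℝ²`. -/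
def LatticeBasis (L : Set R2) (u v : R2) : Prop :=
  LinearIndependent ℝ ![u, v] ∧
    L = {x : R2 | ∃ m n : ℤ, x = (m : ℝ) • u + (n : ℝ) • v}

/-- `L` is a Bravais lattice of `ℝ²`. -/
def IsBravais (L : Set R2) : Prop := ∃ u v : R2, LatticeBasis L u v

/-- The area `|L| = ‖u‖‖v‖|sin θ|` of a Bravais lattice. -/
def HasArea (L : Set R2) (A : ℝ) : Prop :=
  ∃ u v : R2, LatticeBasis L u v ∧
    ‖u‖ * ‖v‖ * |Real.sin (InnerProductGeometry.angle u v)| = A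

/-- The Lennard-Jones potential. -/
def VLJ (r : ℝ) : ℝ := r ^ (-12 : ℤ) - 2 * r ^ (-6 : ℤ)

/-- The Lennard-Jones energy of a lattice. -/
def ELJ (L : Set R2) : ℝ := ∑' x : {x : R2 // x ∈ L ∧ x ≠ 0}, VLJ ‖(x : R2)‖

/-- The Epstein zeta function of a lattice. -/
def zetaL (L : Set R2) (s : ℝ) : ℝ := ∑' x : {x : R2 // x ∈ L ∧ x ≠ 0}, ‖(x : R2)‖ ^ (-s)

/-- The theta function of a lattice. -/
def thetaL (L : Set R2) (α : ℝ) : ℝ := ∑' x : L, Real.exp (-2 * π * α * ‖(x : R2)‖ ^ 2)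

/-- The triangular lattice of area `A`. -/
def triLattice (A : ℝ) : Set R2 :=
  {x : R2 | ∃ m n : ℤ, x =
      (m : ℝ) • (Real.sqrt (2 * A / Real.sqrt 3) • vec2 1 0) +
      (n : ℝ) • (Real.sqrt (2 * A / Real.sqrt 3) • vec2 (1/2) (Real.sqrt 3 / 2))}

/-- `L` is the image of `M` under a linear isometry of `ℝ²`. -/
def IsRotationOf (L M : Set R2) : Prop := ∃ f : R2 ≃ₗᵢ[ℝ] R2, L = f '' M

/-! ### Exponential sums over the first shell -/

/-- A quadratic minorant of `exp (-18d/5)` for `d ≤ 1/2`. Being quadratic, it sums exactly over the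
three shell values, whose sum and sum of squares are functions of `ε` alone. -/
lemma exp_tangent_aux {d : ℝ} (hd : d ≤ 1 / 2) :
    1 - (18 / 5) * d + (73 / 20) * d ^ 2 ≤ exp (-((18 / 5) * d)) := by
  rcases le_total d 0 with h | h
  · have := Real.quadratic_le_exp_of_nonneg (x := -((18 / 5) * d)) (by linarith)
    nlinarith [sq_nonneg d]
  · obtain ⟨u, rfl⟩ : ∃ u, d = u / (9 / 5) := ⟨(9 / 5) * d, by ring⟩
    have hu0 : 0 ≤ u := by linarith
    have hu1 : u ≤ (9 / 10) := by linarith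
    have hb := Real.exp_bound (x := -u) (by rw [abs_neg, abs_of_nonneg hu0]; linarith)
      (n := 5) (by norm_num)
    rw [abs_neg, abs_of_nonneg hu0] at hb
    have hb' := (abs_le.mp hb).1
    simp [Finset.sum_range_succ, Nat.factorial] at hb'
    have h5 : u ^ 5 * (6 / (120 * 5)) ≤ u ^ 4 / 24 := by
      have h4 : 0 ≤ u ^ 4 := by positivity
      nlinarith
    have hlow : 1 - u + u ^ 2 / 2 - u ^ 3 / 6 ≤ exp (-u) := by
      nlinarith
    have hpos : 0 ≤ 1 - u + u ^ 2 / 2 - u ^ 3 / 6 := by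
      nlinarith [mul_nonneg hu0 hu0, sq_nonneg (1 - u), mul_nonneg (sub_nonneg.2 hu1) (sq_nonneg u)]
    have hsq : exp (-((18 / 5) * (u / (9 / 5)))) = exp (-u) ^ 2 := by
      rw [← Real.exp_nat_mul]; congr 1; push_cast; ring
    rw [hsq]
    refine le_trans ?_ (pow_le_pow_left₀ hpos hlow 2)
    have key : 0 ≤ (4367 / 5000) - (4/3) * u + (7/12) * u ^ 2 - u ^ 3 / 6 := by
      nlinarith [mul_nonneg (sub_nonneg.2 hu1) hu0, mul_nonneg (sub_nonneg.2 hu1) (sq_nonneg u),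
        sq_nonneg (u - (9 / 10)), mul_nonneg (mul_nonneg (sub_nonneg.2 hu1) (sub_nonneg.2 hu1)) hu0]
    have h2 := mul_nonneg (sq_nonneg u) key
    have h6 : 0 ≤ u ^ 6 := by positivity
    nlinarith

lemma shell_poly {y : ℝ} (h0 : 0 ≤ y) (h1 : y ≤ 9 / 20) :
    31 / 10 ≤ (1 + y + y ^ 2 / 2) * (2 + (81 / 25) * (3 * (2 - y / (9 / 5)) - (21 / 4))) := by
  have i1 := mul_nonneg h0 (sub_nonneg.2 h1)
  have i2 := mul_nonneg h0 i1
  linarith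

/-- First-shell estimate when one diagonal is long (`q + r ≥ 3/2`) but the shortest vector is not
too short. The two smaller values `p + q` and `p + r` then differ enough that their two
exponentials already exceed `31/10`. -/
lemma first_shell_long {p q r : ℝ} (hp : 0 ≤ p) (hpq : p ≤ q) (hqr : q ≤ r)
    (hD : p * q + q * r + r * p = 3 / 4) (hA : 33 / 50 ≤ p + q) (hC : 3 / 2 ≤ q + r) :
    31 / 10 ≤ exp (-((18 / 5) * (p + q - 1))) + exp (-((18 / 5) * (p + r - 1))) := by
  -- sum and half-difference of the two smaller shell values `p + q` and `p + r`
  set S := 2 * p + q + r with hS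
  set δ := (r - q) / 2 with hδ
  have hAB : S ^ 2 - 4 * δ ^ 2 = 3 + 4 * p ^ 2 := by rw [hS, hδ]; nlinarith
  have hA1 : p + q ≤ 1 := by
    have i1 : 0 ≤ (p + q) * (r - q) := mul_nonneg (by linarith) (by linarith)
    have i2 : 0 ≤ (q - p) * (q + 3 * p) := mul_nonneg (by linarith) (by linarith)
    have i3 : (p + q) ^ 2 ≤ 1 ^ 2 := by nlinarith
    exact (sq_le_sq₀ (by linarith) (by norm_num)).1 i3
  have hSle : S ≤ 2 := by
    have i2 : 0 ≤ (q - p) * (q + 3 * p) := mul_nonneg (by linarith) (by linarith)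
    have i3 : 4 * (p + q) * (p + r) ≤ 3 + (p + q) ^ 2 := by nlinarith
    have i4 : 0 ≤ (1 - (p + q)) * ((p + q) - 33 / 50) :=
      mul_nonneg (by linarith) (by linarith)
    by_contra! hcon
    have i5 : (p + q) * (2 - (p + q)) < (p + q) * (p + r) :=
      mul_lt_mul_of_pos_left (by linarith) (by linarith)
    nlinarith
  have hpS : 4 * p ^ 2 ≤ (S - (3 / 2)) ^ 2 := by
    have i1 : 2 * p ≤ S - (3 / 2) := by linarith
    have i2 := pow_le_pow_left₀ (by linarith) i1 2
    linarith
  have hsum : exp (-((18 / 5) * (p + q - 1))) + exp (-((18 / 5) * (p + r - 1)))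
      = exp ((9 / 5) * (2 - S)) * (2 * cosh ((18 / 5) * δ)) := by
    rw [Real.cosh_eq, mul_div_cancel₀ _ (two_ne_zero), mul_add, ← exp_add, ← exp_add]
    congr 2 <;> (rw [hS, hδ]; ring)
  have hcosh : 2 + ((18 / 5) * δ) ^ 2 ≤ 2 * cosh ((18 / 5) * δ) := by
    have hsinh := Real.self_le_sinh_iff.2 (show 0 ≤ (18 / 5) * δ / 2 by rw [hδ]; linarith)
    have hc : cosh ((18 / 5) * δ) = 2 * sinh ((18 / 5) * δ / 2) ^ 2 + 1 := by
      have := Real.cosh_two_mul ((18 / 5) * δ / 2)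
      rw [mul_div_cancel₀ _ (two_ne_zero), Real.cosh_sq] at this
      rw [this]; ring
    have := pow_le_pow_left₀ (show 0 ≤ (18 / 5) * δ / 2 by rw [hδ]; linarith) hsinh 2
    rw [hc]; linarith
  have hq := Real.quadratic_le_exp_of_nonneg (x := (9 / 5) * (2 - S)) (by linarith)
  set y := (9 / 5) * (2 - S) with hy
  have hy0 : 0 ≤ y := by rw [hy]; linarith
  have hmul : (1 + y + y ^ 2 / 2) * (2 + ((18 / 5) * δ) ^ 2) ≤ exp y * (2 * cosh ((18 / 5) * δ)) := by
    gcongr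
  have : (31 / 10) ≤ (1 + y + y ^ 2 / 2) * (2 + ((18 / 5) * δ) ^ 2) := by
    rcases le_total S (7 / 4) with h | h
    · have h1 : (9 / 20) ≤ y := by rw [hy]; linarith
      have h2 : (31 / 20) ≤ 1 + y + y ^ 2 / 2 := by
        have := pow_le_pow_left₀ (by norm_num) h1 2
        linarith
      have h3 : (31 / 20 : ℝ) * 2 ≤ (1 + y + y ^ 2 / 2) * (2 + ((18 / 5) * δ) ^ 2) :=
        mul_le_mul h2 (by linarith [sq_nonneg ((18 / 5) * δ)]) (by norm_num) (by positivity)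
      linarith
    · have hd : (81 / 25) * (3 * S - (21 / 4)) ≤ ((18 / 5) * δ) ^ 2 := by linarith
      have h1 : (1 + y + y ^ 2 / 2) * (2 + (81 / 25) * (3 * S - (21 / 4))) ≤
          (1 + y + y ^ 2 / 2) * (2 + ((18 / 5) * δ) ^ 2) := by gcongr
      refine le_trans ?_ h1
      have hS2 : S = 2 - y / (9 / 5) := by rw [hy]; ring
      have hyle : y ≤ (9 / 20) := by rw [hy]; linarith
      rw [hS2]
      exact shell_poly hy0 hyle
  linarith

/-- First-shell estimate at `a = 18/5` for ordered parameters. Either the shortest vector is short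
and its term alone suffices, or all three values are moderate and the quadratic minorant applies,
or `first_shell_long` applies. -/
lemma first_shell_sorted {p q r ε : ℝ} (hp : 0 ≤ p) (hpq : p ≤ q) (hqr : q ≤ r)
    (hD : p * q + q * r + r * p = 3 / 4) (hε : ε = 2 * (p + q + r) / 3 - 1) :
    (1 / 10) * min 1 ε + 3 ≤ exp (-((18 / 5) * (p + q - 1))) + exp (-((18 / 5) * (p + r - 1)))
      + exp (-((18 / 5) * (q + r - 1))) := by
  have e2 := exp_pos (-((18 / 5) * (p + r - 1)))
  have e3 := exp_pos (-((18 / 5) * (q + r - 1)))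
  have hm1 : min 1 ε ≤ 1 := min_le_left _ _
  have hm2 : min 1 ε ≤ ε := min_le_right _ _
  rcases le_total (p + q) (33 / 50) with hA | hA
  · have h1 : exp (153 / 125) ≤ exp (-((18 / 5) * (p + q - 1))) := exp_le_exp.2 (by linarith)
    have h2 := Real.sum_le_exp_of_nonneg (x := (153 / 125)) (by norm_num) 4
    norm_num [Finset.sum_range_succ, Nat.factorial] at h2
    linarith
  have hq0 : 0 ≤ q := hp.trans hpq
  have hr0 : 0 ≤ r := hq0.trans hqr
  rcases le_total (q + r) (3 / 2) with hC | hC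
  · have t1 := exp_tangent_aux (d := p + q - 1) (by linarith)
    have t2 := exp_tangent_aux (d := p + r - 1) (by linarith)
    have t3 := exp_tangent_aux (d := q + r - 1) (by linarith)
    nlinarith [sq_nonneg ε]
  · have := first_shell_long hp hpq hqr hD hA hC
    linarith

lemma first_shell_base {p q r ε : ℝ} (hp : 0 ≤ p) (hq : 0 ≤ q) (hr : 0 ≤ r)
    (hD : p * q + q * r + r * p = 3 / 4) (hε : ε = 2 * (p + q + r) / 3 - 1) :
    (1 / 10) * min 1 ε + 3 ≤ exp (-((18 / 5) * (p + r - 1))) + exp (-((18 / 5) * (q + r - 1)))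
      + exp (-((18 / 5) * (p + q - 1))) := by
  rcases le_total p q with h1 | h1 <;> rcases le_total q r with h2 | h2 <;>
    rcases le_total p r with h3 | h3
  · have := first_shell_sorted hp h1 h2 hD hε; linarith
  · have := first_shell_sorted hp h1 h2 hD hε; linarith
  · have := first_shell_sorted (ε := ε) hp h3 h2 (by linarith) (by linarith)
    rw [add_comm r q] at this; linarith
  · have := first_shell_sorted (ε := ε) hr h3 h1 (by linarith) (by linarith)
    rw [add_comm r q, add_comm r p] at this; linarith
  · have := first_shell_sorted (ε := ε) hq h1 h3 (by linarith) (by linarith)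
    rw [add_comm q p] at this; linarith
  · have := first_shell_sorted (ε := ε) hq h2 h3 (by linarith) (by linarith)
    rw [add_comm q p, add_comm r p] at this; linarith
  · have := first_shell_sorted (ε := ε) hr h2 h1 (by linarith) (by linarith)
    rw [add_comm r q, add_comm r p, add_comm q p] at this; linarith
  · have := first_shell_sorted (ε := ε) hr h2 h1 (by linarith) (by linarith)
    rw [add_comm r q, add_comm r p, add_comm q p] at this; linarith

/-- The defect `ε` is the relative excess of the trace `p + q + r` over its minimum `3/2`, attained
only by the triangular form. -/
lemma defect_nonneg {p q r ε : ℝ} (hp : 0 ≤ p) (hq : 0 ≤ q) (hr : 0 ≤ r)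
    (hD : p * q + q * r + r * p = 3 / 4) (hε : ε = 2 * (p + q + r) / 3 - 1) : 0 ≤ ε := by
  have : (3 / 2) ^ 2 ≤ (p + q + r) ^ 2 := by
    nlinarith [sq_nonneg (p - q), sq_nonneg (q - r), sq_nonneg (r - p)]
  have := abs_le_of_sq_le_sq' this (by positivity)
  linarith [this.2]

/-- The six shortest vectors of the triangular form take the values `p + r`, `q + r`, `p + q` under
`qf p q r`; the sum of their Gaussian weights, relative to the weight `exp (-a)` of the triangular
form, exceeds `3` by a definite amount. -/
lemma first_shell {p q r ε a : ℝ} (hp : 0 ≤ p) (hq : 0 ≤ q) (hr : 0 ≤ r)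
    (hD : p * q + q * r + r * p = 3 / 4) (hε : ε = 2 * (p + q + r) / 3 - 1) (ha : (18 / 5) ≤ a) :
    (1 / 10) * min 1 ε + 3 ≤ exp (-(a * (p + r - 1))) + exp (-(a * (q + r - 1)))
      + exp (-(a * (p + q - 1))) := by
  have h0 := first_shell_base hp hq hr hD hε
  have hm : 0 ≤ min 1 ε := le_min zero_le_one (defect_nonneg hp hq hr hD hε)
  have hl : 1 ≤ a / (18 / 5) := by rw [le_div_iff₀ (by norm_num)]; linarith
  -- Bernoulli: `y ^ l ≥ 1 + l (y - 1)` with `l = a / (18 / 5) ≥ 1`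
  have key : ∀ d : ℝ, 1 + a / (18 / 5) * (exp (-((18 / 5) * d)) - 1) ≤ exp (-(a * d)) := by
    intro d
    have := one_add_mul_self_le_rpow_one_add (s := exp (-((18 / 5) * d)) - 1)
      (by linarith [exp_pos (-((18 / 5) * d))]) hl
    refine this.trans (le_of_eq ?_)
    rw [add_sub_cancel, ← Real.exp_mul]
    congr 1; field_simp
  have k1 := key (p + r - 1)
  have k2 := key (q + r - 1)
  have k3 := key (p + q - 1)
  nlinarith

/-! ### Theta series and the gap at large parameters -/

/-- The binary quadratic form `p m² + q n² + r (m - n)²` in Selling parameters. Its determinant is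
`pq + qr + rp`, normalized to `3/4` throughout; the triangular form is `p = q = r = 1/2`, and
nonnegative parameters correspond to a reduced (obtuse) basis. -/
def qf (p q r : ℝ) (x : ℤ × ℤ) : ℝ :=
  p * (x.1 : ℝ) ^ 2 + q * (x.2 : ℝ) ^ 2 + r * ((x.1 : ℝ) - x.2) ^ 2

/-- The theta series of `qf p q r`, including the term `1` of the zero vector. -/
def theta (p q r a : ℝ) : ℝ := ∑' x : ℤ × ℤ, exp (-(a * qf p q r x))

lemma qf_lower {p q r : ℝ} (hp : 0 ≤ p) (hq : 0 ≤ q) (hr : 0 ≤ r)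
    (hD : p * q + q * r + r * p = 3 / 4) :
    ∃ c > 0, ∀ x : ℤ × ℤ, c * ((x.1 : ℝ) ^ 2 + (x.2 : ℝ) ^ 2) ≤ qf p q r x := by
  have hs : 0 < p + q + 2 * r := by
    by_contra! h
    have h1 : p = 0 := by linarith
    have h2 : q = 0 := by linarith
    have h3 : r = 0 := by linarith
    norm_num [h1, h2, h3] at hD
  refine ⟨(3 / 4) / (p + q + 2 * r), by positivity, fun x => ?_⟩
  rw [div_mul_eq_mul_div, div_le_iff₀ hs, ← hD, qf]
  nlinarith [sq_nonneg ((p + r) * x.1 - r * x.2), sq_nonneg ((q + r) * x.2 - r * x.1)]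

lemma hasSum_geom_int {ρ : ℝ} (h0 : 0 ≤ ρ) (h1 : ρ < 1) :
    HasSum (fun n : ℤ => ρ ^ n.natAbs) ((1 + ρ) / (1 - ρ)) := by
  have hg := hasSum_geometric_of_lt_one h0 h1
  have h2 : HasSum (fun n : ℕ => ρ ^ (-((n : ℤ) + 1)).natAbs) (ρ * (1 - ρ)⁻¹) := by
    have e : (fun n : ℕ => ρ ^ (-((n : ℤ) + 1)).natAbs) = fun n => ρ * ρ ^ n := by
      funext n
      rw [Int.natAbs_neg, ← pow_succ']
      congr 1
    rw [e]
    exact hg.mul_left ρ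
  have := HasSum.of_nat_of_neg_add_one (f := fun n : ℤ => ρ ^ n.natAbs) (by simpa using hg) h2
  convert this using 1
  rw [div_eq_mul_inv]; ring

lemma hasSum_prod_self {f : ℤ → ℝ} {S : ℝ} (h0 : 0 ≤ f) (h : HasSum f S) :
    HasSum (fun x : ℤ × ℤ => f x.1 * f x.2) (S * S) :=
  h.mul h (Summable.mul_of_nonneg h.summable h.summable h0 h0)

lemma hasSum_geom_int_prod {ρ : ℝ} (h0 : 0 ≤ ρ) (h1 : ρ < 1) :
    HasSum (fun x : ℤ × ℤ => ρ ^ x.1.natAbs * ρ ^ x.2.natAbs)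
      ((1 + ρ) / (1 - ρ) * ((1 + ρ) / (1 - ρ))) :=
  hasSum_prod_self (f := fun n : ℤ => ρ ^ n.natAbs) (fun _ => pow_nonneg h0 _)
    (hasSum_geom_int h0 h1)

lemma natAbs_le_sq (n : ℤ) : (n.natAbs : ℝ) ≤ (n : ℝ) ^ 2 := by
  have : (n.natAbs : ℤ) ≤ n ^ 2 := by
    rw [← Int.natAbs_sq]; exact_mod_cast Nat.le_self_pow two_ne_zero _
  have h2 : ((n.natAbs : ℤ) : ℝ) ≤ ((n ^ 2 : ℤ) : ℝ) := Int.cast_le.2 this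
  push_cast at h2
  simpa using h2

lemma summable_theta {p q r a : ℝ} (hp : 0 ≤ p) (hq : 0 ≤ q) (hr : 0 ≤ r)
    (hD : p * q + q * r + r * p = 3 / 4) (ha : 0 < a) :
    Summable fun x : ℤ × ℤ => exp (-(a * qf p q r x)) := by
  obtain ⟨c, hc, h⟩ := qf_lower hp hq hr hD
  refine Summable.of_nonneg_of_le (fun _ => (exp_pos _).le) (fun x => ?_)
    (hasSum_geom_int_prod (ρ := exp (-(a * c))) (exp_pos _).le
      (exp_lt_one_iff.2 (by rw [neg_lt_zero]; positivity))).summable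
  rw [← pow_add, ← exp_nat_mul]
  apply exp_le_exp.2
  have h1 := natAbs_le_sq x.1
  have h2 := natAbs_le_sq x.2
  have h3 := h x
  push_cast
  have : a * (c * ((x.1.natAbs : ℝ) + x.2.natAbs)) ≤ a * qf p q r x := by
    gcongr
    refine le_trans ?_ h3
    gcongr
  linarith

/-- The order-three automorphism `(m, n) ↦ (-n, m - n)` of the triangular form. It permutes the
Selling parameters of a general form cyclically. -/
def rot : ℤ × ℤ ≃ ℤ × ℤ where
  toFun x := (-x.2, x.1 - x.2)
  invFun x := (x.2 - x.1, -x.1)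
  left_inv x := by ext <;> simp
  right_inv x := by ext <;> simp

lemma qf_rot (p q r : ℝ) (x : ℤ × ℤ) : qf p q r (rot x) = qf r p q x := by
  simp [qf, rot]; ring

lemma qf_hex_rot (x : ℤ × ℤ) : qf (1/2) (1/2) (1/2) (rot x) = qf (1/2) (1/2) (1/2) x :=
  qf_rot _ _ _ _

/-- The summand of `3 (theta p q r - theta (1/2) (1/2) (1/2))` after averaging over the orbit of
`rot`. -/
def shellDiff (p q r a : ℝ) (x : ℤ × ℤ) : ℝ :=
  exp (-(a * qf p q r x)) + exp (-(a * qf r p q x)) + exp (-(a * qf q r p x))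
    - 3 * exp (-(a * qf (1/2) (1/2) (1/2) x))

lemma hasSum_shellDiff {p q r a : ℝ} (hp : 0 ≤ p) (hq : 0 ≤ q) (hr : 0 ≤ r)
    (hD : p * q + q * r + r * p = 3 / 4) (ha : 0 < a) :
    HasSum (shellDiff p q r a) (3 * (theta p q r a - theta (1/2) (1/2) (1/2) a)) := by
  have h1 := (summable_theta hp hq hr hD ha).hasSum
  have h2 := (rot.hasSum_iff.2 h1)
  have h3 := (rot.hasSum_iff.2 h2)
  simp only [Function.comp_def, qf_rot] at h2 h3
  have h4 := (summable_theta (p := 1/2) (q := 1/2) (r := 1/2) (by norm_num) (by norm_num)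
    (by norm_num) (by norm_num) ha).hasSum
  have h5 := ((h1.add h2).add h3).sub (h4.mul_left 3)
  have e : ∀ u v : ℝ, u + u + u - 3 * v = 3 * (u - v) := fun u v => by ring
  rw [e] at h5
  exact h5

/-- The six minimal vectors of the triangular form. -/
def shell1 : Finset (ℤ × ℤ) := {(1, 0), (0, 1), (-1, -1), (-1, 0), (0, -1), (1, 1)}

/-- The 18 vectors of the `5 × 5` box other than the origin and the minimal vectors. -/
def box2 : Finset (ℤ × ℤ) :=
  (Finset.Icc (-2) 2 ×ˢ Finset.Icc (-2) 2) \ insert (0, 0) shell1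

lemma qf_hex_eq (x : ℤ × ℤ) :
    qf (1/2) (1/2) (1/2) x = ((x.1 ^ 2 - x.1 * x.2 + x.2 ^ 2 : ℤ) : ℝ) := by
  simp [qf]; ring

lemma box_or_large {x : ℤ × ℤ} (h : x ∉ insert (0, 0) shell1) :
    x ∈ box2 ∨ 3 ≤ |x.1| ∨ 3 ≤ |x.2| := by
  by_contra! hc
  obtain ⟨h1, h2, h3⟩ := hc
  rw [abs_lt] at h2 h3
  exact h1 (Finset.mem_sdiff.2 ⟨Finset.mem_product.2
    ⟨Finset.mem_Icc.2 (by omega), Finset.mem_Icc.2 (by omega)⟩, h⟩)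

lemma qf_hex_large {x : ℤ × ℤ} (h : 3 ≤ |x.1| ∨ 3 ≤ |x.2|) :
    3 + 5 / 8 * ((x.1.natAbs : ℝ) + x.2.natAbs) ≤ qf (1/2) (1/2) (1/2) x := by
  have key : ∀ m n : ℤ, 3 ≤ |m| → |n| ≤ |m| →
      3 + 5 / 8 * (|(m : ℝ)| + |(n : ℝ)|) ≤ (m : ℝ) ^ 2 - m * n + n ^ 2 := by
    intro m n h1 h2
    have h1' : (3 : ℝ) ≤ |(m : ℝ)| := by exact_mod_cast h1
    have h2' : |(n : ℝ)| ≤ |(m : ℝ)| := by exact_mod_cast h2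
    have := sq_abs (m : ℝ)
    have i1 := sq_nonneg ((m : ℝ) - 2 * n)
    have i2 : 0 ≤ (|(m : ℝ)| - 3) * (3 / 4 * |(m : ℝ)| + 1) :=
      mul_nonneg (by linarith) (by positivity)
    linarith
  rw [Nat.cast_natAbs, Nat.cast_natAbs, Int.cast_abs, Int.cast_abs, qf_hex_eq]
  push_cast
  rcases le_total |x.2| |x.1| with h' | h'
  · exact key _ _ (by omega) h'
  · have := key _ _ (by omega) h'
    linarith

lemma three_le_qf_hex {x : ℤ × ℤ} (h : x ∉ insert (0, 0) shell1) :
    3 ≤ qf (1/2) (1/2) (1/2) x := by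
  rcases box_or_large h with hb | hb
  · rw [qf_hex_eq]
    have : ∀ y ∈ box2, 3 ≤ y.1 ^ 2 - y.1 * y.2 + y.2 ^ 2 := by decide
    exact_mod_cast this x hb
  · have := qf_hex_large hb
    have h1 : (0 : ℝ) ≤ x.1.natAbs := by positivity
    have h2 : (0 : ℝ) ≤ x.2.natAbs := by positivity
    linarith

lemma exp_neg_two_le : exp (-2) ≤ 1 / 7 := by
  rw [exp_neg, ← one_div]
  apply one_div_le_one_div_of_le (by norm_num)
  have := Real.exp_one_gt_d9
  have h2 : exp 2 = exp 1 ^ 2 := by rw [← exp_nat_mul]; norm_num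
  rw [h2]; nlinarith

lemma exp_tail_le {x : ℤ × ℤ} (h : x ∉ insert (0, 0) shell1) :
    exp (-(16 / 5 * (qf (1/2) (1/2) (1/2) x - 3))) ≤
      (if x ∈ box2 then 1 else 0) + (1/7) ^ x.1.natAbs * (1/7) ^ x.2.natAbs := by
  have hpos : (0 : ℝ) ≤ (1/7) ^ x.1.natAbs * (1/7) ^ x.2.natAbs := by positivity
  rcases box_or_large h with hb | hb
  · rw [if_pos hb]
    have := three_le_qf_hex h
    have := exp_le_one_iff.2 (show -(16 / 5 * (qf (1/2) (1/2) (1/2) x - 3)) ≤ 0 by linarith)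
    linarith
  · have h1 := qf_hex_large hb
    have : exp (-(16 / 5 * (qf (1/2) (1/2) (1/2) x - 3))) ≤
        (1/7) ^ x.1.natAbs * (1/7) ^ x.2.natAbs := by
      rw [← pow_add]
      refine le_trans ?_ (pow_le_pow_left₀ (exp_pos _).le exp_neg_two_le _)
      rw [← exp_nat_mul]
      apply exp_le_exp.2
      push_cast; linarith
    split_ifs <;> linarith

lemma exp_const : 54 / 5 ≤ 9 / 1000 * exp (36 / 5) := by
  have h1 : exp (36 / 5) = exp 1 ^ 7 * exp (1 / 5) := by
    rw [← exp_nat_mul, ← exp_add]; norm_num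
  have h2 := Real.add_one_le_exp (1 / 5 : ℝ)
  have h3 : (2.718 : ℝ) ^ 7 ≤ exp 1 ^ 7 :=
    pow_le_pow_left₀ (by norm_num) (by linarith [Real.exp_one_gt_d9]) 7
  have h4 : (2.718 : ℝ) ^ 7 * (6 / 5) ≤ exp 1 ^ 7 * exp (1 / 5) :=
    mul_le_mul h3 (by linarith) (by norm_num) (by positivity)
  rw [h1]
  norm_num at h4 ⊢
  linarith

/-- The first-order loss `a H exp (-aH)` at a vector of triangular norm `H ≥ 3` is a small multiple
of the minimal-shell weight `exp (-a)`, with exponential decay in `H`. -/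
lemma weight_le {a H : ℝ} (ha : 18 / 5 ≤ a) (hH : 3 ≤ H) :
    a * H * exp (-(a * H)) ≤ 9 / 1000 * exp (-a) * exp (-(16 / 5 * (H - 3))) := by
  have h1 : a ≤ 18 / 5 * exp ((a - 18 / 5) * (H - 1)) := by
    have := Real.add_one_le_exp ((a - 18 / 5) * (H - 1))
    nlinarith
  have h2 : H ≤ 3 * exp (2 / 5 * (H - 3)) := by
    have := Real.add_one_le_exp (2 / 5 * (H - 3))
    linarith
  have h3 : a * H ≤ (18 / 5 * exp ((a - 18 / 5) * (H - 1))) * (3 * exp (2 / 5 * (H - 3))) := by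
    gcongr
  have h4 := exp_const
  calc a * H * exp (-(a * H)) ≤ (18 / 5 * exp ((a - 18 / 5) * (H - 1))) *
        (3 * exp (2 / 5 * (H - 3))) * exp (-(a * H)) := by gcongr
    _ = 54 / 5 * (exp (-(36 / 5)) * exp (-a) * exp (-(16 / 5 * (H - 3)))) := by
        rw [show 54 / 5 * (exp (-(36 / 5)) * exp (-a) * exp (-(16 / 5 * (H - 3)))) =
          (18/5 * 3) * (exp (-(36 / 5)) * exp (-a) * exp (-(16 / 5 * (H - 3)))) by ring]
        rw [show ∀ u v w : ℝ, (18 / 5 * u) * (3 * v) * w = (18/5*3) * (u * v * w) by intros; ring]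
        simp only [← exp_add]
        congr 2; ring
    _ ≤ (9 / 1000 * exp (36 / 5)) * (exp (-(36 / 5)) * exp (-a) * exp (-(16 / 5 * (H - 3)))) := by
        gcongr
    _ = _ := by
        rw [show ∀ u v w z : ℝ, (9 / 1000 * u) * (v * w * z) = 9/1000 * (u * v) * w * z by
          intros; ring, ← exp_add]
        simp

/-- Away from the minimal vectors, the mean of the three orbit values is `H (1 + ε)`, so Jensen
bounds the orbit sum below by `3 exp (-a H (1 + ε))`, and the loss against `3 exp (-a H)` is of
first order in `min 1 ε`. -/
lemma shellDiff_ge_far {p q r ε a : ℝ} (hε0 : 0 ≤ ε) (hε : ε = 2 * (p + q + r) / 3 - 1)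
    (ha : 18 / 5 ≤ a) {x : ℤ × ℤ} (h : x ∉ insert (0, 0) shell1) :
    -(3 * (9 / 1000 * exp (-a) * min 1 ε *
      ((if x ∈ box2 then 1 else 0) + (1/7) ^ x.1.natAbs * (1/7) ^ x.2.natAbs)))
      ≤ shellDiff p q r a x := by
  have h3 := three_le_qf_hex h
  have hw := weight_le ha h3
  have ht := exp_tail_le h
  set H := qf (1/2) (1/2) (1/2) x with hH
  have haH : 1 ≤ a * H := by nlinarith
  have hm : 0 ≤ min 1 ε := le_min zero_le_one hε0
  -- the three values add up to `3 * H * (1 + ε)`; tangent line of `exp` at the mean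
  have hmean : qf p q r x + qf r p q x + qf q r p x = 3 * (H * (1 + ε)) := by
    rw [hH, hε]; simp only [qf]; ring
  have tang : ∀ E : ℝ, exp (-(a * (H * (1 + ε)))) * (1 - a * (E - H * (1 + ε))) ≤ exp (-(a * E)) := by
    intro E
    have := Real.add_one_le_exp (-(a * (E - H * (1 + ε))))
    calc _ ≤ exp (-(a * (H * (1 + ε)))) * exp (-(a * (E - H * (1 + ε)))) := by
          gcongr; linarith
      _ = _ := by rw [← exp_add]; congr 1; ring
  have hD : 3 * (exp (-(a * (H * (1 + ε)))) - exp (-(a * H))) ≤ shellDiff p q r a x := by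
    have t1 := tang (qf p q r x)
    have t2 := tang (qf r p q x)
    have t3 := tang (qf q r p x)
    have : exp (-(a * (H * (1 + ε)))) * (1 - a * (qf p q r x - H * (1 + ε))) +
      exp (-(a * (H * (1 + ε)))) * (1 - a * (qf r p q x - H * (1 + ε))) +
      exp (-(a * (H * (1 + ε)))) * (1 - a * (qf q r p x - H * (1 + ε))) =
      3 * exp (-(a * (H * (1 + ε)))) := by
      have : qf p q r x = 3 * (H * (1 + ε)) - qf r p q x - qf q r p x := by linarith
      rw [this]; ring
    rw [shellDiff, ← hH]
    linarith
  have hsplit : exp (-(a * (H * (1 + ε)))) = exp (-(a * H)) * exp (-(a * H * ε)) := by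
    rw [← exp_add]; congr 1; ring
  have hloss : 1 - a * H * min 1 ε ≤ exp (-(a * H * ε)) := by
    rcases le_total 1 ε with h | h
    · rw [min_eq_left h]; linarith [exp_pos (-(a * H * ε))]
    · rw [min_eq_right h]; linarith [Real.add_one_le_exp (-(a * H * ε))]
  have hfin : a * H * exp (-(a * H)) * min 1 ε ≤ 9 / 1000 * exp (-a) * min 1 ε *
      ((if x ∈ box2 then 1 else 0) + (1/7) ^ x.1.natAbs * (1/7) ^ x.2.natAbs) := by
    calc _ ≤ 9 / 1000 * exp (-a) * exp (-(16 / 5 * (H - 3))) * min 1 ε := by gcongr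
      _ ≤ 9 / 1000 * exp (-a) * ((if x ∈ box2 then 1 else 0) +
            (1/7) ^ x.1.natAbs * (1/7) ^ x.2.natAbs) * min 1 ε := by gcongr
      _ = _ := by ring
  have h5 : exp (-(a * H)) * (1 - a * H * min 1 ε) ≤ exp (-(a * H)) * exp (-(a * H * ε)) := by
    gcongr
  rw [hsplit] at hD
  linarith

lemma shellDiff_shell1 {p q r ε a : ℝ} (hp : 0 ≤ p) (hq : 0 ≤ q) (hr : 0 ≤ r)
    (hD : p * q + q * r + r * p = 3 / 4) (hε : ε = 2 * (p + q + r) / 3 - 1) (ha : 18 / 5 ≤ a)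
    {x : ℤ × ℤ} (h : x ∈ shell1) : exp (-a) * (1 / 10 * min 1 ε) ≤ shellDiff p q r a x := by
  have hf := first_shell hp hq hr hD hε ha
  have e : ∀ d : ℝ, exp (-(a * d)) = exp (-a) * exp (-(a * (d - 1))) := by
    intro d; rw [← exp_add]; congr 1; ring
  have hf' := mul_le_mul_of_nonneg_left hf (exp_pos (-a)).le
  rw [mul_add, mul_add, mul_add, ← e, ← e, ← e] at hf'
  have e1 : shellDiff p q r a x = exp (-(a * (p + r))) + exp (-(a * (q + r))) +
      exp (-(a * (p + q))) - 3 * exp (-a) := by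
    simp only [shell1, Finset.mem_insert, Finset.mem_singleton] at h
    rcases h with rfl | rfl | rfl | rfl | rfl | rfl <;> simp [shellDiff, qf] <;> ring_nf
  linarith

/-- Quantitative minimality of the triangular form for `a ≥ 18/5`: the gain on the six minimal
vectors outweighs the total loss on all the others. -/
theorem theta_gap {p q r ε a : ℝ} (hp : 0 ≤ p) (hq : 0 ≤ q) (hr : 0 ≤ r)
    (hD : p * q + q * r + r * p = 3 / 4) (hε : ε = 2 * (p + q + r) / 3 - 1) (ha : 18 / 5 ≤ a) :
    theta (1/2) (1/2) (1/2) a + 1 / 50 * exp (-a) * min 1 ε ≤ theta p q r a := by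
  have hε0 := defect_nonneg hp hq hr hD hε
  have hm : 0 ≤ min 1 ε := le_min zero_le_one hε0
  have hs := hasSum_shellDiff hp hq hr hD (show 0 < a by linarith)
  have g1 : HasSum (fun x : ℤ × ℤ => if x ∈ shell1 then exp (-a) * (1 / 10 * min 1 ε) else 0)
      (∑ x ∈ shell1, exp (-a) * (1 / 10 * min 1 ε)) := by
    convert hasSum_sum_of_ne_finset_zero (s := shell1)
      (f := fun x : ℤ × ℤ => if x ∈ shell1 then exp (-a) * (1 / 10 * min 1 ε) else 0)
      (L := .unconditional _) (fun x hx => by simp [hx]) using 1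
    exact (Finset.sum_congr rfl fun x hx => by simp [hx])
  have g2 : HasSum (fun x : ℤ × ℤ => if x ∈ box2 then (1 : ℝ) else 0) (∑ x ∈ box2, (1 : ℝ)) := by
    convert hasSum_sum_of_ne_finset_zero (s := box2)
      (f := fun x : ℤ × ℤ => if x ∈ box2 then (1 : ℝ) else 0)
      (L := .unconditional _) (fun x hx => by simp [hx]) using 1
    exact (Finset.sum_congr rfl fun x hx => by simp [hx])
  have g3 := hasSum_geom_int_prod (ρ := 1/7) (by norm_num) (by norm_num)
  have g := g1.sub (((g2.add g3).mul_left (9 / 1000 * exp (-a) * min 1 ε)).mul_left 3)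
  have c1 : shell1.card = 6 := by decide
  have c2 : box2.card = 18 := by decide
  have hle := hasSum_le (fun x => ?_) g hs
  · rw [Finset.sum_const, Finset.sum_const, c1, c2] at hle
    have hpos : 0 ≤ exp (-a) * min 1 ε := by positivity
    norm_num at hle
    nlinarith
  · have hnn : 0 ≤ 3 * (9 / 1000 * exp (-a) * min 1 ε *
      ((if x ∈ box2 then 1 else 0) + (1/7) ^ x.1.natAbs * (1/7) ^ x.2.natAbs)) := by
      have : (0 : ℝ) ≤ if x ∈ box2 then 1 else 0 := by split_ifs <;> norm_num
      positivity
    by_cases h1 : x ∈ shell1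
    · rw [if_pos h1]
      have := shellDiff_shell1 hp hq hr hD hε ha h1
      linarith
    · rw [if_neg h1]
      by_cases h0 : x = (0, 0)
      · have : shellDiff p q r a x = 0 := by
          rw [h0]; norm_num [shellDiff, qf]
        linarith
      · have := shellDiff_ge_far hε0 hε ha (x := x)
          (by simp only [Finset.mem_insert, not_or]; exact ⟨h0, h1⟩)
        linarith

/-! ### The functional equation and minimality at every parameter -/

/-- Poisson summation for a Gaussian on a shifted copy of `ℤ`. -/
lemma poisson_shift {α : ℝ} (hα : 0 < α) (β : ℝ) :
    ∑' m : ℤ, ((exp (-(α * ((m : ℝ) - β) ^ 2)) : ℝ) : ℂ) = (√(π / α) : ℝ) *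
      ∑' k : ℤ, ((exp (-(π ^ 2 / α * (k : ℝ) ^ 2)) : ℝ) : ℂ) *
        Complex.exp (2 * π * Complex.I * β * k) := by
  have hpa : 0 < π / α := by positivity
  have h := Complex.tsum_exp_neg_quadratic (a := ((π / α : ℝ) : ℂ)) (by simpa using hpa)
    (Complex.I * β)
  have hs : ((π / α : ℝ) : ℂ) ^ (1 / 2 : ℂ) = ((√(π / α) : ℝ) : ℂ) := by
    rw [Real.sqrt_eq_rpow, Complex.ofReal_cpow hpa.le]; norm_num
  have hs0 : ((√(π / α) : ℝ) : ℂ) ≠ 0 := by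
    rw [Complex.ofReal_ne_zero]; positivity
  rw [hs] at h
  have hα' : (α : ℂ) ≠ 0 := Complex.ofReal_ne_zero.2 hα.ne'
  have hπ' : (π : ℂ) ≠ 0 := Complex.ofReal_ne_zero.2 pi_ne_zero
  have e1 : ∀ k : ℤ, ((exp (-(π ^ 2 / α * (k : ℝ) ^ 2)) : ℝ) : ℂ) *
      Complex.exp (2 * π * Complex.I * β * k) =
      Complex.exp (-π * ((π / α : ℝ) : ℂ) * k ^ 2 + 2 * π * (Complex.I * β) * k) := by
    intro k
    rw [Complex.ofReal_exp, ← Complex.exp_add]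
    congr 1; push_cast; ring
  have e2 : ∀ m : ℤ, ((exp (-(α * ((m : ℝ) - β) ^ 2)) : ℝ) : ℂ) =
      Complex.exp (-π / ((π / α : ℝ) : ℂ) * (m + Complex.I * (Complex.I * β)) ^ 2) := by
    intro m
    rw [Complex.ofReal_exp, ← mul_assoc, Complex.I_mul_I]
    congr 1; push_cast; field_simp; ring
  rw [tsum_congr e1, tsum_congr e2, h, one_div, mul_inv_cancel_left₀ hs0]

lemma summable_gauss {c : ℝ} (hc : 0 < c) : Summable fun n : ℤ => exp (-(c * (n : ℝ) ^ 2)) := by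
  refine Summable.of_nonneg_of_le (fun _ => (exp_pos _).le) (fun x => ?_)
    (hasSum_geom_int (ρ := exp (-c)) (exp_pos _).le (exp_lt_one_iff.2 (by linarith))).summable
  rw [← exp_nat_mul]
  apply exp_le_exp.2
  have h1 := natAbs_le_sq x
  nlinarith

/-- The summand of the mixed (half-transformed) theta series. -/
def mixed (c d κ : ℝ) (n k : ℤ) : ℂ :=
  ((exp (-(c * (n : ℝ) ^ 2)) : ℝ) : ℂ) * (((exp (-(d * (k : ℝ) ^ 2)) : ℝ) : ℂ) *
    Complex.exp (2 * π * Complex.I * κ * n * k))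

lemma mixed_swap (c d κ : ℝ) (n k : ℤ) : mixed c d κ n k = mixed d c κ k n := by
  have : (2 * π * Complex.I * κ * n * k : ℂ) = 2 * π * Complex.I * κ * k * n := by ring
  rw [mixed, mixed, this]; ring

lemma summable_mixed {c d : ℝ} (hc : 0 < c) (hd : 0 < d) (κ : ℝ) :
    Summable (Function.uncurry (mixed c d κ)) := by
  have h := Summable.mul_of_nonneg (summable_gauss hc) (summable_gauss hd)
    (fun _ => (exp_pos _).le) (fun _ => (exp_pos _).le)
  refine Summable.of_norm (h.congr fun x => ?_)
  have : (2 * π * Complex.I * κ * x.1 * x.2 : ℂ) = ((2 * π * κ * x.1 * x.2 : ℝ) : ℂ) * Complex.I := by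
    push_cast; ring
  simp only [Function.uncurry, mixed]
  rw [this, norm_mul, norm_mul, Complex.norm_exp_ofReal_mul_I, mul_one, Complex.norm_real,
    Complex.norm_real, Real.norm_of_nonneg (exp_pos _).le, Real.norm_of_nonneg (exp_pos _).le]

lemma pr_pos {p q r : ℝ} (hp : 0 ≤ p) (hr : 0 ≤ r)
    (hD : p * q + q * r + r * p = 3 / 4) : 0 < p + r := by
  by_contra! h
  have h1 : p = 0 := by linarith
  have h3 : r = 0 := by linarith
  norm_num [h1, h3] at hD

/-- Poisson summation in the first variable only, after completing the square. -/
lemma theta_eq_mixed {p q r a b : ℝ} (hp : 0 ≤ p) (hq : 0 ≤ q) (hr : 0 ≤ r)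
    (hD : p * q + q * r + r * p = 3 / 4) (ha : 0 < a) (hab : a * b = π ^ 2 / (3 / 4)) :
    (theta p q r a : ℂ) = (√(π / (a * (p + r))) : ℝ) *
      ∑' n : ℤ, ∑' k : ℤ, mixed (a * (3 / 4) / (p + r)) (b * (3 / 4) / (p + r)) (r / (p + r)) n k := by
  have hP := pr_pos hp hr hD
  set P := p + r with hPdef
  have hsum : Summable fun x : ℤ × ℤ => ((exp (-(a * qf p q r x)) : ℝ) : ℂ) :=
    Complex.summable_ofReal.2 (summable_theta hp hq hr hD ha)
  rw [theta, Complex.ofReal_tsum, ← (Equiv.prodComm ℤ ℤ).tsum_eq]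
  have hsum' := (Equiv.prodComm ℤ ℤ).summable_iff.2 hsum
  simp only [Function.comp_def] at hsum'
  rw [hsum'.tsum_prod, ← tsum_mul_left]
  congr 1; funext n
  have e : ∀ m : ℤ, ((exp (-(a * qf p q r (Equiv.prodComm ℤ ℤ (n, m)))) : ℝ) : ℂ) =
      ((exp (-(a * (3 / 4) / P * (n : ℝ) ^ 2)) : ℝ) : ℂ) *
        ((exp (-(a * P * ((m : ℝ) - r / P * n) ^ 2)) : ℝ) : ℂ) := by
    intro m
    rw [← Complex.ofReal_mul, ← exp_add, ← hD]
    congr 2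
    simp only [qf, Equiv.prodComm_apply, Prod.swap]
    field_simp
    rw [hPdef]; ring
  simp_rw [e]
  rw [tsum_mul_left, poisson_shift (mul_pos ha hP)]
  simp only [mixed]
  rw [tsum_mul_left]
  have hb : π ^ 2 / (a * P) = b * (3 / 4) / P := by
    field_simp
    field_simp at hab
    linarith
  have e3 : ∀ k : ℤ, Complex.exp (2 * π * Complex.I * ((r / P * n : ℝ) : ℂ) * k) =
    Complex.exp (2 * π * Complex.I * ((r / P : ℝ) : ℂ) * n * k) := by
    intro k; congr 1; push_cast; ring
  simp_rw [hb, e3]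
  ring

/-- The functional equation of the theta series: applying `theta_eq_mixed` to `a` and to `b`
gives the same double series with the order of summation exchanged. -/
theorem theta_functional {p q r a b : ℝ} (hp : 0 ≤ p) (hq : 0 ≤ q) (hr : 0 ≤ r)
    (hD : p * q + q * r + r * p = 3 / 4) (ha : 0 < a) (hb : 0 < b)
    (hab : a * b = π ^ 2 / (3 / 4)) :
    √a * theta p q r a = √b * theta p q r b := by
  have hP := pr_pos hp hr hD
  have h1 := theta_eq_mixed hp hq hr hD ha hab
  have h2 := theta_eq_mixed hp hq hr hD hb (by rw [mul_comm]; exact hab)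
  have hs := summable_mixed (c := a * (3 / 4) / (p + r)) (d := b * (3 / 4) / (p + r))
    (by positivity) (by positivity) (r / (p + r))
  have hc := hs.tsum_comm
  have hc2 : ∑' n : ℤ, ∑' k : ℤ, mixed (a * (3 / 4) / (p + r)) (b * (3 / 4) / (p + r))
      (r / (p + r)) n k = ∑' n : ℤ, ∑' k : ℤ, mixed (b * (3 / 4) / (p + r))
      (a * (3 / 4) / (p + r)) (r / (p + r)) n k := by
    rw [← hc]
    simp_rw [mixed_swap (a * (3 / 4) / (p + r))]
  rw [hc2] at h1
  have hsq : ∀ {t : ℝ}, 0 < t → √t * √(π / (t * (p + r))) = √(π / (p + r)) := by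
    intro t ht
    rw [← Real.sqrt_mul ht.le]; congr 1; field_simp
  have : ((√a * theta p q r a : ℝ) : ℂ) = ((√b * theta p q r b : ℝ) : ℂ) := by
    rw [Complex.ofReal_mul, Complex.ofReal_mul, h1, h2, ← mul_assoc, ← mul_assoc,
      ← Complex.ofReal_mul, ← Complex.ofReal_mul, hsq ha, hsq hb]
  exact_mod_cast this

/-- The triangular form minimizes the theta series at every `a > 0`, strictly so for the other
forms. -/
theorem theta_min {p q r : ℝ} (hp : 0 ≤ p) (hq : 0 ≤ q) (hr : 0 ≤ r)
    (hD : p * q + q * r + r * p = 3 / 4) {a : ℝ} (ha : 0 < a) :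
    theta (1/2) (1/2) (1/2) a ≤ theta p q r a ∧
      (0 < 2 * (p + q + r) / 3 - 1 → theta (1/2) (1/2) (1/2) a < theta p q r a) := by
  have key : ∀ {a : ℝ}, 18 / 5 ≤ a → theta (1/2) (1/2) (1/2) a ≤ theta p q r a ∧
      (0 < 2 * (p + q + r) / 3 - 1 → theta (1/2) (1/2) (1/2) a < theta p q r a) := by
    intro a ha
    have h := theta_gap hp hq hr hD rfl ha
    have hε := defect_nonneg hp hq hr hD rfl
    refine ⟨le_trans (le_add_of_nonneg_right ?_) h, fun h0 => lt_of_lt_of_le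
      (lt_add_of_pos_right _ ?_) h⟩
    · have := le_min zero_le_one hε
      positivity
    · have := lt_min zero_lt_one h0
      positivity
  rcases le_total (18 / 5) a with h | h
  · exact key h
  -- the dual parameter `b = 4π²/(3a)` is at least `18/5` since `4π²/3 ≥ (18/5)²`
  have hab : a * (π ^ 2 / (3 / 4) / a) = π ^ 2 / (3 / 4) := by field_simp
  have hbp : 0 < π ^ 2 / (3 / 4) / a := by positivity
  set b := π ^ 2 / (3 / 4) / a with hb
  have hb2 : 18 / 5 ≤ b := by
    rw [hb, le_div_iff₀ ha]
    have := Real.pi_gt_d2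
    nlinarith
  have f1 := theta_functional hp hq hr hD ha hbp hab
  have f2 := theta_functional (p := 1/2) (q := 1/2) (r := 1/2) (by norm_num) (by norm_num)
    (by norm_num) (by norm_num) ha hbp hab
  obtain ⟨k1, k2⟩ := key hb2
  have sa : 0 < √a := Real.sqrt_pos.2 ha
  have sb : 0 < √b := Real.sqrt_pos.2 hbp
  refine ⟨?_, fun h0 => ?_⟩
  · refine le_of_mul_le_mul_left ?_ sa
    rw [f1, f2]; gcongr
  · refine lt_of_mul_lt_mul_left ?_ sa.le
    rw [f1, f2]; have := k2 h0; gcongr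

/-! ### Mellin transform and the Epstein zeta function of a form -/

section Mellin
open MeasureTheory

/-- The Epstein zeta function `∑ Q(x) ^ (-σ)` of the form `Q = qf p q r`. -/
def epstein (p q r σ : ℝ) : ℝ := ∑' x : {x : ℤ × ℤ // x ≠ 0}, qf p q r x ^ (-σ)

lemma qf_pos {p q r : ℝ} (hp : 0 ≤ p) (hq : 0 ≤ q) (hr : 0 ≤ r)
    (hD : p * q + q * r + r * p = 3 / 4) {x : ℤ × ℤ} (hx : x ≠ 0) : 0 < qf p q r x := by
  obtain ⟨c, hc, h⟩ := qf_lower hp hq hr hD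
  refine lt_of_lt_of_le ?_ (h x)
  have : x.1 ≠ 0 ∨ x.2 ≠ 0 := by
    by_contra! h; exact hx (Prod.ext h.1 h.2)
  rcases this with h | h
  · have : (x.1 : ℝ) ≠ 0 := Int.cast_ne_zero.2 h
    positivity
  · have : (x.2 : ℝ) ≠ 0 := Int.cast_ne_zero.2 h
    positivity

lemma summable_epstein {p q r σ : ℝ} (hp : 0 ≤ p) (hq : 0 ≤ q) (hr : 0 ≤ r)
    (hD : p * q + q * r + r * p = 3 / 4) (hσ : 1 < σ) :
    Summable fun x : {x : ℤ × ℤ // x ≠ 0} => qf p q r x ^ (-σ) := by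
  obtain ⟨c, hc, h⟩ := qf_lower hp hq hr hD
  have h0 := EisensteinSeries.summable_one_div_norm_rpow (k := 2 * σ) (by linarith)
  have h1 := ((finTwoArrowEquiv ℤ).symm.summable_iff.2 h0).subtype {x : ℤ × ℤ | x ≠ 0}
  refine Summable.of_nonneg_of_le (fun x => rpow_nonneg (qf_pos hp hq hr hD x.2).le _)
    (fun x => ?_) (h1.mul_left (c ^ (-σ)))
  obtain ⟨⟨m, n⟩, hx⟩ := x
  simp only [Function.comp_def, finTwoArrowEquiv_symm_apply]
  set v : Fin 2 → ℤ := ![m, n] with hv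
  have hv0 : v ≠ 0 := fun h0 => hx (Prod.ext (congrFun h0 0) (congrFun h0 1))
  have hn : 0 < ‖v‖ := norm_pos_iff.2 hv0
  have hle : ‖v‖ ^ 2 ≤ (m : ℝ) ^ 2 + (n : ℝ) ^ 2 := by
    have : ‖v‖ ≤ √((m : ℝ) ^ 2 + (n : ℝ) ^ 2) := by
      refine (pi_norm_le_iff_of_nonneg (Real.sqrt_nonneg _)).2 fun i => ?_
      rw [Int.norm_eq_abs]
      fin_cases i
      · exact Real.abs_le_sqrt (by simp [hv]; positivity)
      · exact Real.abs_le_sqrt (by simp [hv]; positivity)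
    calc _ ≤ √((m : ℝ) ^ 2 + (n : ℝ) ^ 2) ^ 2 := by gcongr
      _ = _ := Real.sq_sqrt (by positivity)
  have e : c ^ (-σ) * ‖v‖ ^ (-(2 * σ)) = (c * ‖v‖ ^ 2) ^ (-σ) := by
    rw [Real.mul_rpow hc.le (by positivity), ← Real.rpow_natCast, ← Real.rpow_mul hn.le]
    congr 2; push_cast; ring
  show qf p q r (m, n) ^ (-σ) ≤ c ^ (-σ) * ‖v‖ ^ (-(2 * σ))
  rw [e]
  apply Real.rpow_le_rpow_of_nonpos (by positivity) _ (by linarith)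
  refine le_trans ?_ (h (m, n))
  gcongr

/-- The integrand of the Mellin transform, `t ^ (σ - 1) * (theta t - 1)` for `t > 0`, as an
`ENNReal`-valued sum. -/
def mellinSum (p q r σ t : ℝ) : ENNReal :=
  ∑' x : {x : ℤ × ℤ // x ≠ 0}, ENNReal.ofReal (t ^ (σ - 1) * exp (-(qf p q r x * t)))

lemma measurable_mellinSum (p q r σ : ℝ) : Measurable (mellinSum p q r σ) := by
  refine Measurable.tsum fun x => ?_
  fun_prop

lemma lintegral_mellinSum {p q r σ : ℝ} (hp : 0 ≤ p) (hq : 0 ≤ q) (hr : 0 ≤ r)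
    (hD : p * q + q * r + r * p = 3 / 4) (hσ : 1 < σ) :
    ∫⁻ t in Set.Ioi 0, mellinSum p q r σ t = ENNReal.ofReal (Gamma σ * epstein p q r σ) := by
  have hG := Gamma_pos_of_pos (show 0 < σ by linarith)
  simp only [mellinSum]
  rw [lintegral_tsum fun x => by fun_prop,
    epstein, ← tsum_mul_left, ENNReal.ofReal_tsum_of_nonneg
      (fun x => mul_nonneg hG.le (rpow_nonneg (qf_pos hp hq hr hD x.2).le _))
      ((summable_epstein hp hq hr hD hσ).mul_left _)]
  congr 1; funext x
  have hx := qf_pos hp hq hr hD x.2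
  have hi := Real.integral_rpow_mul_exp_neg_mul_Ioi (show 0 < σ by linarith) hx
  rw [← ofReal_integral_eq_lintegral_ofReal, hi]
  · congr 1
    rw [one_div, Real.inv_rpow hx.le, Real.rpow_neg hx.le]; ring
  · exact Integrable.of_integral_ne_zero (by rw [hi]; positivity)
  · filter_upwards [ae_restrict_mem measurableSet_Ioi] with t ht
    have : (0 : ℝ) < t := ht
    positivity

lemma mellinSum_eq {p q r σ t : ℝ} (hp : 0 ≤ p) (hq : 0 ≤ q) (hr : 0 ≤ r)
    (hD : p * q + q * r + r * p = 3 / 4) (ht : 0 < t) :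
    mellinSum p q r σ t = ENNReal.ofReal (t ^ (σ - 1) * (theta p q r t - 1)) := by
  have hs := summable_theta hp hq hr hD ht
  have h1 := hs.tsum_subtype_add_tsum_subtype_compl {0}
  have h2 : theta p q r t - 1 = ∑' x : {x : ℤ × ℤ // x ≠ 0}, exp (-(t * qf p q r x)) := by
    rw [theta, ← h1, tsum_singleton (0 : ℤ × ℤ) (fun x => exp (-(t * qf p q r x)))]
    have h0 : exp (-(t * qf p q r 0)) = 1 := by simp [qf]
    rw [h0, add_sub_cancel_left]
    rfl
  rw [h2, ← tsum_mul_left, ENNReal.ofReal_tsum_of_nonneg]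
  · simp only [mellinSum, mul_comm t]
  · intro x; positivity
  · exact (hs.subtype {x : ℤ × ℤ | x ≠ 0}).mul_left _

/-- Among the normalized reduced forms, the triangular one minimizes the Epstein zeta function,
strictly unless the defect vanishes. -/
theorem epstein_min {p q r σ : ℝ} (hp : 0 ≤ p) (hq : 0 ≤ q) (hr : 0 ≤ r)
    (hD : p * q + q * r + r * p = 3 / 4) (hσ : 1 < σ) :
    epstein (1/2) (1/2) (1/2) σ ≤ epstein p q r σ ∧
      (0 < 2 * (p + q + r) / 3 - 1 → epstein (1/2) (1/2) (1/2) σ < epstein p q r σ) := by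
  have hG := Gamma_pos_of_pos (show 0 < σ by linarith)
  have L1 := lintegral_mellinSum hp hq hr hD hσ
  have L2 := lintegral_mellinSum (p := 1/2) (q := 1/2) (r := 1/2) (by norm_num) (by norm_num)
    (by norm_num) (by norm_num) hσ
  have hn : ∀ {p q r : ℝ}, 0 ≤ p → 0 ≤ q → 0 ≤ r → p * q + q * r + r * p = 3 / 4 →
      0 ≤ Gamma σ * epstein p q r σ := fun hp hq hr hD =>
    mul_nonneg hG.le (tsum_nonneg fun x => rpow_nonneg (qf_pos hp hq hr hD x.2).le _)
  have M1 : ∀ t : ℝ, 0 < t → mellinSum p q r σ t = _ := fun t ht => mellinSum_eq hp hq hr hD ht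
  have M2 : ∀ t : ℝ, 0 < t → mellinSum (1/2) (1/2) (1/2) σ t = _ := fun t ht =>
    mellinSum_eq (by norm_num) (by norm_num) (by norm_num) (by norm_num) ht
  constructor
  · have hle : ∫⁻ t in Set.Ioi 0, mellinSum (1/2) (1/2) (1/2) σ t ≤
        ∫⁻ t in Set.Ioi 0, mellinSum p q r σ t := by
      refine setLIntegral_mono (measurable_mellinSum _ _ _ _) fun t ht => ?_
      have ht' : 0 < t := ht
      rw [M1 t ht, M2 t ht]
      have := (theta_min hp hq hr hD ht).1
      gcongr
    rw [L1, L2, ENNReal.ofReal_le_ofReal_iff (hn hp hq hr hD)] at hle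
    exact le_of_mul_le_mul_left hle hG
  · intro h0
    have hlt : ∫⁻ t in Set.Ioi 0, mellinSum (1/2) (1/2) (1/2) σ t <
        ∫⁻ t in Set.Ioi 0, mellinSum p q r σ t := by
      refine setLIntegral_strict_mono measurableSet_Ioi (by simp) (measurable_mellinSum _ _ _ _)
        (by rw [L2]; exact ENNReal.ofReal_ne_top) (Filter.Eventually.of_forall fun t ht => ?_)
      have ht' : 0 < t := ht
      rw [M1 t ht, M2 t ht]
      have h1 := (theta_min hp hq hr hD ht').2 h0
      have h2 := (rpow_pos_of_pos ht' (σ - 1))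
      have h3 : 1 ≤ theta (1/2) (1/2) (1/2) t := by
        have := (summable_theta (p := 1/2) (q := 1/2) (r := 1/2) (by norm_num) (by norm_num)
          (by norm_num) (by norm_num) ht').le_tsum 0 (fun _ _ => (exp_pos _).le)
        simpa [theta, qf] using this
      refine (ENNReal.ofReal_lt_ofReal_iff (mul_pos h2 (by linarith))).2 ?_
      gcongr
    rw [L1, L2, ENNReal.ofReal_lt_ofReal_iff_of_nonneg
      (hn (by norm_num) (by norm_num) (by norm_num) (by norm_num))] at hlt
    exact lt_of_mul_lt_mul_left hlt hG.le

end Mellin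

/-! ### Reduction of lattice bases -/

/-- Reduction of a positive binary form `E x² + 2F xy + G y²`, obtained by moving the point
`(F + i √D) / G` of the upper half-plane into the modular fundamental domain: `|Re| ≤ 1/2` and
`|z| ≥ 1` become the two reduction inequalities. -/
lemma exists_reduced_form {E F G D : ℝ} (hG : 0 < G) (hD : 0 < D) (h : E * G - F ^ 2 = D) :
    ∃ a b c d : ℤ, a * d - b * c = 1 ∧
      2 * |a * c * E + (a * d + b * c) * F + b * d * G| ≤
        (c : ℝ) ^ 2 * E + 2 * (c * d) * F + (d : ℝ) ^ 2 * G ∧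
      (c : ℝ) ^ 2 * E + 2 * (c * d) * F + (d : ℝ) ^ 2 * G ≤
        (a : ℝ) ^ 2 * E + 2 * (a * b) * F + (b : ℝ) ^ 2 * G := by
  let z : UpperHalfPlane := ⟨⟨F / G, √D / G⟩, div_pos (Real.sqrt_pos.2 hD) hG⟩
  obtain ⟨g, h1, h2⟩ := ModularGroup.exists_smul_mem_fd z
  have hdet := g.det_coe
  rw [Matrix.det_fin_two] at hdet
  set a := g 0 0 with ha
  set b := g 0 1 with hb
  set c := g 1 0 with hc
  set d := g 1 1 with hd
  have hz : ((g • z : UpperHalfPlane) : ℂ) = ((a : ℝ) * z + (b : ℝ)) / ((c : ℝ) * z + (d : ℝ)) := by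
    rw [UpperHalfPlane.specialLinearGroup_apply]
    simp [ha, hb, hc, hd]
  have hre : (g • z).re = ((g • z : UpperHalfPlane) : ℂ).re := rfl
  rw [hre] at h2
  set w : ℂ := ((g • z : UpperHalfPlane) : ℂ) with hw
  have hzc : (z : ℂ) = ⟨F / G, √D / G⟩ := rfl
  have hsD : √D ^ 2 = D := Real.sq_sqrt hD.le
  have nsq : ∀ x y : ℝ, G * Complex.normSq ((x : ℝ) * z + (y : ℝ)) =
      x ^ 2 * E + 2 * (x * y) * F + y ^ 2 * G := by
    intro x y
    rw [hzc, Complex.normSq_apply]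
    simp
    field_simp
    rw [hsD, ← h]; ring
  have hM : 0 < Complex.normSq ((c : ℝ) * z + (d : ℝ)) := by
    have := UpperHalfPlane.normSq_denom_pos g (z := z) (UpperHalfPlane.im_ne_zero z)
    simpa [UpperHalfPlane.denom, hc, hd] using this
  have hM0 := Complex.normSq_pos.1 hM
  have e1 : w * ((c : ℝ) * z + (d : ℝ)) = (a : ℝ) * z + (b : ℝ) := by
    rw [hz, div_mul_cancel₀ _ hM0]
  have e2 := congrArg Complex.normSq e1
  rw [Complex.normSq_mul] at e2
  have e3 : w.re * Complex.normSq ((c : ℝ) * z + (d : ℝ)) * G =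
      a * c * E + (a * d + b * c) * F + b * d * G := by
    have : w * (Complex.normSq ((c : ℝ) * z + (d : ℝ)) : ℝ) =
        ((a : ℝ) * z + (b : ℝ)) * (starRingEnd ℂ) ((c : ℝ) * z + (d : ℝ)) := by
      rw [← e1, mul_assoc, Complex.mul_conj]
    have := congrArg Complex.re this
    rw [Complex.re_mul_ofReal] at this
    rw [this, hzc]
    simp
    field_simp
    rw [hsD, ← h]; ring
  refine ⟨a, b, c, d, hdet, ?_, ?_⟩
  · rw [← e3, ← nsq, abs_mul, abs_mul, abs_of_pos hG, abs_of_pos hM]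
    have := mul_le_mul_of_nonneg_right h2 (mul_pos hM hG).le
    linarith
  · rw [← nsq, ← nsq, ← e2]
    have := mul_le_mul_of_nonneg_right h1 (mul_pos hM hG).le
    linarith

/-- A unimodular change of basis, with determinant `e = ±1`. -/
lemma LatticeBasis.change {L : Set R2} {u v : R2} (h : LatticeBasis L u v) {a b c d e : ℤ}
    (hdet : a * d - b * c = e) (he : e * e = 1) :
    LatticeBasis L ((a : ℝ) • u + (b : ℝ) • v) ((c : ℝ) • u + (d : ℝ) • v) := by
  obtain ⟨hli, rfl⟩ := h
  have hdet' : (a : ℝ) * d - b * c = e := by exact_mod_cast hdet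
  have he' : (e : ℝ) * e = 1 := by exact_mod_cast he
  constructor
  · rw [LinearIndependent.pair_iff] at hli ⊢
    intro s t hst
    obtain ⟨h1, h2⟩ := hli (s * a + t * c) (s * b + t * d) (by rw [← hst]; module)
    have hs : s * e = 0 := by rw [← hdet']; linear_combination d * h1 - c * h2
    have ht : t * e = 0 := by rw [← hdet']; linear_combination a * h2 - b * h1
    constructor
    · linear_combination e * hs - s * he'
    · linear_combination e * ht - t * he'
  · ext x
    constructor
    · rintro ⟨m, n, rfl⟩
      refine ⟨e * (m * d - n * c), e * (n * a - m * b), ?_⟩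
      have k1 : (m : ℝ) = (e * (m * d - n * c)) * a + (e * (n * a - m * b)) * c := by
        linear_combination (-(m : ℝ)) * he' - e * m * hdet'
      have k2 : (n : ℝ) = (e * (m * d - n * c)) * b + (e * (n * a - m * b)) * d := by
        linear_combination (-(n : ℝ)) * he' - e * n * hdet'
      push_cast
      nth_rewrite 1 [k1]
      nth_rewrite 3 [k2]
      module
    · rintro ⟨m, n, rfl⟩
      refine ⟨m * a + n * c, m * b + n * d, ?_⟩
      push_cast; module

lemma norm_sq_comb (u v : R2) (x y : ℝ) : ‖x • u + y • v‖ ^ 2 =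
    x ^ 2 * ‖u‖ ^ 2 + 2 * (x * y) * inner ℝ u v + y ^ 2 * ‖v‖ ^ 2 := by
  rw [norm_add_sq_real, norm_smul, norm_smul, mul_pow, mul_pow, Real.norm_eq_abs, Real.norm_eq_abs,
    sq_abs, sq_abs, real_inner_smul_left, real_inner_smul_right]
  ring

lemma inner_comb (u v : R2) (x y z w : ℝ) : inner ℝ (x • u + y • v) (z • u + w • v) =
    x * z * ‖u‖ ^ 2 + (x * w + y * z) * inner ℝ u v + y * w * ‖v‖ ^ 2 := by
  simp only [inner_add_left, inner_add_right, real_inner_smul_left, real_inner_smul_right,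
    real_inner_self_eq_norm_sq, real_inner_comm u v]
  ring

/-- A basis `(u, v)` of `L` is a Selling basis at scale `N` when its Gram matrix is `N` times
that of the form `qf p q r`, with nonnegative parameters and normalized determinant. -/
structure SellingBasis (L : Set R2) (N p q r : ℝ) (u v : R2) : Prop where
  basis : LatticeBasis L u v
  hp : 0 ≤ p
  hq : 0 ≤ q
  hr : 0 ≤ r
  hD : p * q + q * r + r * p = 3 / 4
  norm_u : ‖u‖ ^ 2 = N * (p + r)
  norm_v : ‖v‖ ^ 2 = N * (q + r)
  inner_uv : inner ℝ u v = -(N * r)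

/-- After reduction, the sign of the second vector can be chosen so that the basis is obtuse, and
the Selling parameters are then nonnegative. -/
lemma exists_sellingBasis {L : Set R2} {A : ℝ} (hA : 0 < A) (h : HasArea L A) :
    ∃ p q r u v, SellingBasis L (2 * A / √3) p q r u v := by
  obtain ⟨u, v, hb, hArea⟩ := h
  have hgram : ‖u‖ ^ 2 * ‖v‖ ^ 2 - inner ℝ u v ^ 2 = A ^ 2 := by
    rw [← hArea, ← InnerProductGeometry.cos_angle_mul_norm_mul_norm]
    simp only [mul_pow, sq_abs, Real.sin_sq]
    ring
  have hv : 0 < ‖v‖ ^ 2 := by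
    have : ‖v‖ ≠ 0 := by
      intro h0; rw [h0] at hArea; simp at hArea; exact hA.ne hArea
    positivity
  obtain ⟨a, b, c, d, hdet, h1, h2⟩ := exists_reduced_form hv (by positivity : 0 < A ^ 2) hgram
  have hb1 := hb.change hdet (by norm_num)
  rw [← norm_sq_comb, ← inner_comb] at h1
  rw [← norm_sq_comb, ← norm_sq_comb] at h2
  have hdet' : (a : ℝ) * d - b * c = 1 := by exact_mod_cast hdet
  have hgram1 : ‖(a : ℝ) • u + (b : ℝ) • v‖ ^ 2 * ‖(c : ℝ) • u + (d : ℝ) • v‖ ^ 2 -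
      inner ℝ ((a : ℝ) • u + (b : ℝ) • v) ((c : ℝ) • u + (d : ℝ) • v) ^ 2 = A ^ 2 := by
    rw [norm_sq_comb, norm_sq_comb, inner_comb, ← hgram]
    linear_combination (‖u‖ ^ 2 * ‖v‖ ^ 2 - inner ℝ u v ^ 2) * ((a : ℝ) * d - b * c + 1) * hdet'
  generalize (a : ℝ) • u + (b : ℝ) • v = u' at *
  generalize (c : ℝ) • u + (d : ℝ) • v = v' at *
  have h3 : (0 : ℝ) < √3 := by positivity
  have h3' : √3 ^ 2 = 3 := Real.sq_sqrt (by norm_num)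
  have main : ∀ w : R2, LatticeBasis L u' w → ‖w‖ ^ 2 = ‖v'‖ ^ 2 →
      inner ℝ u' w = -|inner ℝ u' v'| → ∃ p q r u v, SellingBasis L (2 * A / √3) p q r u v := by
    intro w hw hnw hiw
    have habs := abs_nonneg (inner ℝ u' v')
    have hsq := sq_abs (inner ℝ u' v')
    set t := |inner ℝ u' v'| with ht
    set N := 2 * A / √3 with hN
    have hN0 : 0 < N := by positivity
    have hN2 : N ^ 2 * (3 / 4) = A ^ 2 := by
      rw [hN, div_pow, h3']; ring
    refine ⟨(‖u'‖ ^ 2 - t) / N, (‖w‖ ^ 2 - t) / N, t / N, u', w, hw, ?_, ?_, ?_, ?_, ?_, ?_, ?_⟩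
    · apply div_nonneg _ hN0.le; linarith
    · apply div_nonneg _ hN0.le; linarith
    · positivity
    · field_simp
      rw [hnw]
      linarith
    · field_simp; ring
    · field_simp; ring
    · rw [hiw]; field_simp
  rcases le_total (inner ℝ u' v') 0 with hs | hs
  · exact main v' hb1 rfl (by rw [abs_of_nonpos hs, neg_neg])
  · have hb2 := hb1.change (a := 1) (b := 0) (c := 0) (d := -1) (e := -1) (by norm_num)
      (by norm_num)
    simp only [Int.cast_one, Int.cast_zero, Int.cast_neg, one_smul, zero_smul, add_zero, zero_add,
      neg_smul] at hb2
    exact main (-v') hb2 (by rw [norm_neg]) (by rw [inner_neg_right, abs_of_nonneg hs])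

lemma SellingBasis.norm_sq {L : Set R2} {N p q r : ℝ} {u v : R2} (h : SellingBasis L N p q r u v)
    (x : ℤ × ℤ) : ‖(x.1 : ℝ) • u + (x.2 : ℝ) • v‖ ^ 2 = N * qf p q r x := by
  rw [norm_sq_comb, h.norm_u, h.norm_v, h.inner_uv, qf]; ring

lemma LatticeBasis.coord_inj {L : Set R2} {u v : R2} (h : LatticeBasis L u v) {x y : ℤ × ℤ}
    (hxy : (x.1 : ℝ) • u + (x.2 : ℝ) • v = (y.1 : ℝ) • u + (y.2 : ℝ) • v) : x = y := by
  have h1 := LinearIndependent.pair_iff.1 h.1 ((x.1 : ℝ) - y.1) ((x.2 : ℝ) - y.2) (by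
    rw [← sub_eq_zero] at hxy; rw [← hxy]; module)
  ext
  · exact_mod_cast sub_eq_zero.1 h1.1
  · exact_mod_cast sub_eq_zero.1 h1.2

/-- Coordinates in a Selling basis turn the zeta function of the lattice into that of its form. -/
lemma SellingBasis.zetaL_eq {L : Set R2} {N p q r : ℝ} {u v : R2} (hN : 0 < N)
    (h : SellingBasis L N p q r u v) (s : ℝ) :
    zetaL L s = N ^ (-(s / 2)) * epstein p q r (s / 2) := by
  let f : {x : ℤ × ℤ // x ≠ 0} → {x : R2 // x ∈ L ∧ x ≠ 0} := fun x =>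
    ⟨(x.1.1 : ℝ) • u + (x.1.2 : ℝ) • v, by rw [h.basis.2]; exact ⟨_, _, rfl⟩, fun h0 =>
      x.2 (h.basis.coord_inj (by simpa using h0))⟩
  have hf : Function.Bijective f := by
    constructor
    · intro x y hxy
      exact Subtype.ext (h.basis.coord_inj (congrArg Subtype.val hxy))
    · rintro ⟨x, hx, hx0⟩
      have hx' := hx
      rw [h.basis.2] at hx'
      obtain ⟨m, n, rfl⟩ := hx'
      refine ⟨⟨(m, n), fun h0 => hx0 ?_⟩, rfl⟩
      obtain ⟨rfl, rfl⟩ := Prod.mk.inj h0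
      simp
  rw [zetaL, epstein, ← (Equiv.ofBijective f hf).tsum_eq, ← tsum_mul_left]
  congr 1; funext x
  have hx := h.norm_sq x.1
  have hq := qf_pos h.hp h.hq h.hr h.hD x.2
  show ‖(x.1.1 : ℝ) • u + (x.1.2 : ℝ) • v‖ ^ (-s) = _
  rw [← Real.mul_rpow hN.le hq.le, ← hx, ← Real.rpow_natCast, ← Real.rpow_mul (norm_nonneg _)]
  congr 1; push_cast; ring

lemma inner_vec2 (a b c d : ℝ) : inner ℝ (vec2 a b) (vec2 c d) = a * c + b * d := by
  simp [vec2, PiLp.inner_apply, Fin.sum_univ_two]; ring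

lemma norm_sq_vec2 (a b : ℝ) : ‖vec2 a b‖ ^ 2 = a ^ 2 + b ^ 2 := by
  rw [← real_inner_self_eq_norm_sq, inner_vec2]; ring

/-- The second generator of `triLattice A` is negated to make the basis obtuse. -/
lemma sellingBasis_tri {A : ℝ} (hA : 0 < A) :
    SellingBasis (triLattice A) (2 * A / √3) (1/2) (1/2) (1/2) (√(2 * A / √3) • vec2 1 0)
      (-(√(2 * A / √3) • vec2 (1/2) (√3 / 2))) := by
  have hN0 : 0 < 2 * A / √3 := by positivity
  have h3' : √3 ^ 2 = 3 := Real.sq_sqrt (by norm_num)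
  set N := 2 * A / √3 with hN
  have hNs : √N ^ 2 = N := Real.sq_sqrt hN0.le
  have hNne : √N ≠ 0 := by positivity
  have hb : LatticeBasis (triLattice A) (√N • vec2 1 0) (√N • vec2 (1/2) (√3 / 2)) := by
    refine ⟨LinearIndependent.pair_iff.2 fun s t hst => ?_, rfl⟩
    have h0 := congrFun (congrArg (WithLp.equiv 2 _) hst) 0
    have h1 := congrFun (congrArg (WithLp.equiv 2 _) hst) 1
    simp [vec2, hNne] at h0 h1
    subst h1
    simpa [hNne] using h0
  have hb2 := hb.change (a := 1) (b := 0) (c := 0) (d := -1) (e := -1) (by norm_num) (by norm_num)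
  simp only [Int.cast_one, Int.cast_zero, Int.cast_neg, one_smul, zero_smul, add_zero, zero_add,
    neg_smul] at hb2
  refine ⟨hb2, by norm_num, by norm_num, by norm_num, by norm_num, ?_, ?_, ?_⟩
  · rw [norm_smul, mul_pow, norm_sq_vec2, Real.norm_eq_abs, sq_abs, hNs]; norm_num
  · rw [norm_neg, norm_smul, mul_pow, norm_sq_vec2, Real.norm_eq_abs, sq_abs, hNs]
    linear_combination N / 4 * h3'
  · rw [inner_neg_right, real_inner_smul_left, real_inner_smul_right, inner_vec2]
    linear_combination (-(1 : ℝ) / 2) * hNs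

/-- A lattice whose Gram matrix is that of `triLattice A` in some basis is a rotated copy of it. -/
lemma isRotationOf_tri {L : Set R2} {A : ℝ} {u v : R2} (hA : 0 < A)
    (h : SellingBasis L (2 * A / √3) (1/2) (1/2) (1/2) u v) : IsRotationOf L (triLattice A) := by
  have hN0 : 0 < 2 * A / √3 := by positivity
  have h3 : (0 : ℝ) < √3 := by positivity
  have h3' : √3 ^ 2 = 3 := Real.sq_sqrt (by norm_num)
  have hu := h.norm_u
  have hv := h.norm_v
  have hi := h.inner_uv
  have hbasis := h.basis.2
  unfold triLattice
  set N := 2 * A / √3 with hN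
  have hNs : √N ^ 2 = N := Real.sq_sqrt hN0.le
  have hNpos : 0 < √N := by positivity
  -- the linear map sending the generators of `triLattice A` to `u` and `-v`
  let g : R2 →ₗ[ℝ] R2 :=
    { toFun := fun x => ((x 0 - x 1 / √3) / √N) • u + (-(2 * x 1 / (√3 * √N))) • v
      map_add' := fun x y => by
        simp only [PiLp.add_apply]; match_scalars <;> (field_simp; try ring)
      map_smul' := fun c x => by
        simp only [PiLp.smul_apply, smul_eq_mul, RingHom.id_apply]
        match_scalars <;> (field_simp; try ring) }
  have hg : ∀ x, g x = ((x 0 - x 1 / √3) / √N) • u + (-(2 * x 1 / (√3 * √N))) • v := fun x => rfl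
  have hnorm : ∀ x, ‖g x‖ = ‖x‖ := by
    intro x
    refine (sq_eq_sq₀ (norm_nonneg _) (norm_nonneg _)).1 ?_
    rw [hg, norm_sq_comb, hu, hv, hi, EuclideanSpace.real_norm_sq_eq, Fin.sum_univ_two]
    field_simp
    rw [hNs, h3']
    linear_combination 2 * N * x 0 ^ 2 * h3'
  have hT1 : g (√N • vec2 1 0) = u := by
    rw [hg]; simp [vec2, hNpos.ne']
  have hT2 : g (√N • vec2 (1/2) (√3 / 2)) = -v := by
    rw [hg]
    simp [vec2]
    match_scalars <;> (field_simp; try ring)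
  refine ⟨(LinearIsometry.mk g hnorm).toLinearIsometryEquiv rfl, ?_⟩
  rw [hbasis]
  ext x
  simp only [Set.mem_image, Set.mem_ofPred_eq]
  constructor
  · rintro ⟨m, n, rfl⟩
    refine ⟨_, ⟨m, -n, rfl⟩, ?_⟩
    show g _ = _
    rw [map_add, g.map_smul ((m : ℤ) : ℝ), g.map_smul ((-n : ℤ) : ℝ), hT1, hT2]
    push_cast; module
  · rintro ⟨y, ⟨m, n, rfl⟩, rfl⟩
    refine ⟨m, -n, ?_⟩
    show g _ = _
    rw [map_add, g.map_smul (m : ℝ), g.map_smul (n : ℝ), hT1, hT2]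
    push_cast; module

/-! ### The minimization theorem -/

/-- For every `s > 2` and `A > 0`, the triangular lattice `Λ_A` is the unique (up to
rotation) minimizer of the Epstein zeta function `L ↦ ζ_L(s)` among Bravais lattices of
area `A`. -/
theorem triangular_minimizes_epstein_zeta (s : ℝ) (hs : 2 < s) (A : ℝ) (hA : 0 < A) :
    (∀ L : Set R2, IsBravais L → HasArea L A → zetaL (triLattice A) s ≤ zetaL L s) ∧
    (∀ L : Set R2, IsBravais L → HasArea L A → zetaL L s = zetaL (triLattice A) s →
      IsRotationOf L (triLattice A)) := by
  have hN : 0 < 2 * A / √3 := by positivity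
  have hpow : 0 < (2 * A / √3) ^ (-(s / 2)) := by positivity
  have htri := (sellingBasis_tri hA).zetaL_eq hN s
  constructor
  · intro L _ hL
    obtain ⟨p, q, r, u, v, h⟩ := exists_sellingBasis hA hL
    rw [htri, h.zetaL_eq hN]
    have := (epstein_min h.hp h.hq h.hr h.hD (show 1 < s / 2 by linarith)).1
    gcongr
  · intro L _ hL heq
    obtain ⟨p, q, r, u, v, h⟩ := exists_sellingBasis hA hL
    have hD := h.hD
    have hε := defect_nonneg h.hp h.hq h.hr hD rfl
    rw [htri, h.zetaL_eq hN] at heq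
    have heq' := mul_left_cancel₀ hpow.ne' heq
    have hstrict := (epstein_min h.hp h.hq h.hr h.hD (show 1 < s / 2 by linarith)).2
    have h0 : p + q + r = 3 / 2 := by
      by_contra hne
      have hlt := hstrict (lt_of_le_of_ne hε fun h0 => hne (by linarith))
      exact hlt.ne heq'.symm
    -- `(p - q)² + (q - r)² + (r - p)² = 2 (p + q + r)² - 6 (pq + qr + rp) = 0`
    have hsq : (p - q) ^ 2 + (q - r) ^ 2 + (r - p) ^ 2 = 0 := by
      linear_combination 2 * (p + q + r + 3 / 2) * h0 - 6 * hD
    have e1 : p - q = 0 := by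
      refine pow_eq_zero_iff two_ne_zero |>.1 ?_
      nlinarith [sq_nonneg (p - q), sq_nonneg (q - r), sq_nonneg (r - p)]
    have e2 : q - r = 0 := by
      refine pow_eq_zero_iff two_ne_zero |>.1 ?_
      nlinarith [sq_nonneg (p - q), sq_nonneg (q - r), sq_nonneg (r - p)]
    obtain rfl : p = 1 / 2 := by linarith
    obtain rfl : q = 1 / 2 := by linarith
    obtain rfl : r = 1 / 2 := by linarith
    exact isRotationOf_tri hA h
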